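/- Assume the Diophantine setting of the context, let 0 < θ < 1 and 0 < σ ≤ 1, set C* := 13/(1−θ) and C₁ := 28·θ^{−1}(q+3)·(8(q+3)C*θ^{−1})^{2/θ}·(ln(8(q+3)C*θ^{−1}))^{2/θ+1}. Then for all finitely supported α, β : ℤ → ℕ with equal total mass |α| = |β| ≥ 1, α ≠ β, and every j ∈ ℤ with α_j + β_j ≥ 1, one has γ · exp(−σ·(∑_{i∈ℤ} ⟨i⟩^θ(α_i+β_i) − 2⟨j⟩^θ + |π|)) ≤ e^{C₁ σ^{−3/θ}} · |∑_{i∈ℤ} ω_i (α_i − β_i)|, where π := ∑_{i∈ℤ} i·(α_i − β_i). -/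

import Mathlib

/-!
List the modes of `α` with sign `+` and those of `β` with sign `-`, and order them by modulus as
`a, b` and a remainder `R`. Let `T` be the sum of `⟨i⟩^θ` over `R` and `P = |π|`. Conservation of
momentum bounds `⟨a⟩` by `⟨b⟩`, the remainder and `P`; since concavity discounts each smaller
summand by `θ`, one gets `⟨a⟩^θ ≤ ⟨b⟩^θ + θ (T + P)`, and the Gevrey exponent controls
`(1 - θ) (T + P)`.

If the quadratic divisor `∑ i² (α_i - β_i)` is large compared with the number of modes, then
`∑ ω_i (α_i - β_i)` is at least `1` because `ω_i - i²` is bounded. Otherwise momentum and the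
quadratic divisor together bound `|a| + |b|` (unless `a` and `b` cancel) by `P` and squares of the
modes in `R`, so that `∑ |α_i - β_i| ⟨i⟩^{θ/2}` is at most `13 / (1 - θ)` times the exponent. In the
Diophantine product the factors at high modes are absorbed by this weighted sum, with a factor of
order `σ`, and there are only about `(B log B)^{2/θ}` low modes, `B` being proportional to `1 / σ`;
they produce the constant.
-/

open scoped BigOperators

/-- `⟨j⟩ := max(|j|,1)` as a real number. -/
noncomputable def jap (j : ℤ) : ℝ := max (|(j : ℝ)|) 1

lemma one_le_jap (j : ℤ) : 1 ≤ jap j := le_max_right _ _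

lemma jap_pos (j : ℤ) : 0 < jap j := one_pos.trans_le (one_le_jap j)

lemma abs_le_jap (j : ℤ) : |(j : ℝ)| ≤ jap j := le_max_left _ _

lemma jap_le_abs_add_one (j : ℤ) : jap j ≤ |(j : ℝ)| + 1 :=
  max_le (by linarith) (by linarith [abs_nonneg (j : ℝ)])

lemma card_filter_jap_le (F : Finset ℤ) {M : ℝ} (hM : 1 ≤ M) :
    ((F.filter fun n => jap n ≤ M).card : ℝ) ≤ 3 * M := by
  have hsub : (F.filter fun n => jap n ≤ M) ⊆ Finset.Icc (-⌊M⌋) ⌊M⌋ := by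
    intro n hn
    have hnM : |(n : ℝ)| ≤ M := (abs_le_jap n).trans (Finset.mem_filter.1 hn).2
    exact Finset.mem_Icc.2 (abs_le.1 (Int.le_floor.2 (by exact_mod_cast hnM)))
  have hcard := Finset.card_le_card hsub
  have hfloor : 0 ≤ ⌊M⌋ := Int.floor_nonneg.2 (by linarith)
  rw [Int.card_Icc] at hcard
  calc ((F.filter fun n => jap n ≤ M).card : ℝ) ≤ 2 * ⌊M⌋ + 1 := by
        exact_mod_cast (by omega : ((F.filter fun n => jap n ≤ M).card : ℤ) ≤ 2 * ⌊M⌋ + 1)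
    _ ≤ 3 * M := by linarith [Int.floor_le M]

section PowerInequalities

variable {θ x y : ℝ}

lemma rpow_add_le_add_mul_rpow_sub_one (hθ0 : 0 ≤ θ) (hθ1 : θ ≤ 1) (hx : 0 < x) (hy : -x ≤ y) :
    (x + y) ^ θ ≤ x ^ θ + θ * (x ^ (θ - 1) * y) := by
  have hyx : -1 ≤ y / x := by rw [le_div_iff₀ hx]; linarith
  calc (x + y) ^ θ = x ^ θ * (1 + y / x) ^ θ := by
        rw [← Real.mul_rpow hx.le (by linarith)]; congr 1; field_simp
    _ ≤ x ^ θ * (1 + θ * (y / x)) := by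
        gcongr; exact rpow_one_add_le_one_add_mul_self hyx hθ0 hθ1
    _ = x ^ θ + θ * (x ^ (θ - 1) * y) := by rw [Real.rpow_sub_one hx.ne']; ring

lemma rpow_add_le_add_mul_rpow (hθ0 : 0 ≤ θ) (hθ1 : θ ≤ 1) (hy : 0 < y) (hyx : y ≤ x) :
    (x + y) ^ θ ≤ x ^ θ + θ * y ^ θ := by
  have hx : 0 < x := hy.trans_le hyx
  calc (x + y) ^ θ ≤ x ^ θ + θ * (x ^ (θ - 1) * y) :=
        rpow_add_le_add_mul_rpow_sub_one hθ0 hθ1 hx (by linarith)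
    _ ≤ x ^ θ + θ * (y ^ (θ - 1) * y) := by
        gcongr x ^ θ + θ * (?_ * y)
        exact Real.rpow_le_rpow_of_nonpos hy hyx (by linarith)
    _ = x ^ θ + θ * y ^ θ := by rw [← Real.rpow_add_one hy.ne', sub_add_cancel]

lemma rpow_add_multiset_sum_le (hθ0 : 0 ≤ θ) (hθ1 : θ ≤ 1) (s : Multiset ℝ)
    (hs : ∀ y ∈ s, 0 < y ∧ y ≤ x) :
    (x + s.sum) ^ θ ≤ x ^ θ + θ * (s.map (· ^ θ)).sum := by
  induction s using Multiset.induction with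
  | empty => simp
  | cons a s ih =>
    have ih := ih fun y hy => hs y (Multiset.mem_cons_of_mem hy)
    obtain ⟨ha0, hax⟩ := hs a (Multiset.mem_cons_self a s)
    have hsum : 0 ≤ s.sum :=
      Multiset.sum_nonneg fun y hy => (hs y (Multiset.mem_cons_of_mem hy)).1.le
    have hstep := rpow_add_le_add_mul_rpow hθ0 hθ1 ha0 (show a ≤ x + s.sum by linarith)
    rw [Multiset.sum_cons, Multiset.map_cons, Multiset.sum_cons,
      show x + (a + s.sum) = x + s.sum + a by ring]
    linarith

lemma multiset_sum_rpow_le (hθ0 : 0 < θ) (hθ1 : θ ≤ 1) (s : Multiset ℝ) (hs : ∀ y ∈ s, 0 ≤ y) :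
    s.sum ^ θ ≤ (s.map (· ^ θ)).sum :=
  Multiset.le_sum_of_subadditive_on_pred (· ^ θ) (0 ≤ ·) (Real.zero_rpow hθ0.ne').le le_rfl
    (fun _ _ ha hb => Real.rpow_add_le_add_rpow ha hb hθ0.le hθ1) (fun _ _ => add_nonneg) s hs

lemma rpow_add_rpow_le_two_mul_rpow (hθ0 : 0 ≤ θ) (hθ1 : θ ≤ 1) (hx : 0 ≤ x) (hy : 0 ≤ y) :
    x ^ θ + y ^ θ ≤ 2 * ((x + y) / 2) ^ θ := by
  have h := (Real.concaveOn_rpow hθ0 hθ1).2 (Set.mem_Ici.2 hx) (Set.mem_Ici.2 hy)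
    one_half_pos.le one_half_pos.le (add_halves 1)
  simp only [smul_eq_mul] at h
  rw [show (x + y) / 2 = 1 / 2 * x + 1 / 2 * y by ring]
  linarith

lemma rpow_le_sqrt (hx : 1 ≤ x) (hθ : θ ≤ 1 / 2) : x ^ θ ≤ √x := by
  rw [Real.sqrt_eq_rpow]
  exact Real.rpow_le_rpow_of_exponent_le hx hθ

lemma rpow_add_rpow_le_of_add_le {p r : ℝ} (hθ0 : 0 < θ) (hθ1 : θ ≤ 1 / 2) (hx : 0 ≤ x)
    (hy : 0 ≤ y) (hp : p = 0 ∨ 1 ≤ p) (hr : 0 ≤ r) (h : x + y ≤ 22 + p + 12 * r) :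
    x ^ θ + y ^ θ ≤ 6.64 + 2 * p + 4.9 * r ^ θ := by
  have hθ : θ ≤ 1 := by linarith
  have hp0 : 0 ≤ p := by rcases hp with rfl | hp <;> linarith
  have hpθ : p ^ θ ≤ p := by
    rcases hp with rfl | hp
    · rw [Real.zero_rpow hθ0.ne']
    · exact Real.rpow_le_self_of_one_le hp hθ
  have h11 : (11 : ℝ) ^ θ ≤ 3.32 :=
    (rpow_le_sqrt (by norm_num) hθ1).trans (Real.sqrt_le_iff.2 (by norm_num))
  have h6 : (6 : ℝ) ^ θ ≤ 2.45 :=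
    (rpow_le_sqrt (by norm_num) hθ1).trans (Real.sqrt_le_iff.2 (by norm_num))
  calc x ^ θ + y ^ θ ≤ 2 * ((x + y) / 2) ^ θ := rpow_add_rpow_le_two_mul_rpow hθ0.le hθ hx hy
    _ ≤ 2 * (11 + (p + 6 * r)) ^ θ := by gcongr; linarith
    _ ≤ 2 * (11 ^ θ + (p + 6 * r) ^ θ) := by
        gcongr; exact Real.rpow_add_le_add_rpow (by norm_num) (by positivity) hθ0.le hθ
    _ ≤ 2 * (11 ^ θ + (p ^ θ + (6 * r) ^ θ)) := by
        gcongr; exact Real.rpow_add_le_add_rpow hp0 (by positivity) hθ0.le hθ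
    _ = 2 * (11 ^ θ + (p ^ θ + 6 ^ θ * r ^ θ)) := by rw [Real.mul_rpow (by norm_num) hr]
    _ ≤ 2 * (3.32 + (p + 2.45 * r ^ θ)) := by gcongr
    _ = 6.64 + 2 * p + 4.9 * r ^ θ := by ring

end PowerInequalities

lemma abs_add_abs_le_of_ne {u v : ℤ} (h : u ≠ v) :
    |u| + |v| ≤ |u ^ 2 - v ^ 2| + |u - v| := by
  have hsub : 1 ≤ |u - v| := Int.one_le_abs (sub_ne_zero.2 h)
  have hmax : |u| + |v| ≤ |u - v| ∨ |u| + |v| ≤ |u + v| := by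
    rcases abs_cases u with hu | hu <;> rcases abs_cases v with hv | hv <;>
      rcases abs_cases (u - v) with hd | hd <;> rcases abs_cases (u + v) with hs | hs <;> omega
  rw [sq_sub_sq, abs_mul]
  rcases hmax with hmax | hmax <;> nlinarith [abs_nonneg (u + v)]

lemma abs_add_abs_le_of_not_cancel {u v : ℤ} {e f : ℤˣ} (h : ¬(u = v ∧ e = -f)) :
    |u| + |v| ≤ |e * u ^ 2 + f * v ^ 2| + |e * u + f * v| := by
  have hsq (x : ℤ) : |x| ≤ x ^ 2 := (Int.le_self_sq |x|).trans_eq (sq_abs x)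
  have hsame : |u| + |v| ≤ |u ^ 2 + v ^ 2| + |u + v| := by
    linarith [hsq u, hsq v, le_abs_self (u ^ 2 + v ^ 2), abs_nonneg (u + v)]
  rcases Int.units_eq_one_or e with rfl | rfl <;> rcases Int.units_eq_one_or f with rfl | rfl
  · simpa using hsame
  · simpa [← sub_eq_add_neg] using abs_add_abs_le_of_ne fun huv => h ⟨huv, by simp⟩
  · rw [← abs_neg (_ + _), ← abs_neg (_ + (_ : ℤ))]
    simpa [← sub_eq_add_neg, add_comm] using abs_add_abs_le_of_ne fun huv => h ⟨huv, rfl⟩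
  · rw [← abs_neg (_ + _), ← abs_neg (_ + (_ : ℤ))]
    simpa [add_comm] using hsame

section SignedSums

variable {ι : Type*}

/-- The sum of `f` over the indices of `W`, each counted with its sign. The units of `ℤ` are used
as the group `{1, -1}` of signs. -/
def signedSum (W : Multiset (ι × ℤˣ)) (f : ι → ℝ) : ℝ := (W.map fun w => (w.2 : ℤ) * f w.1).sum

/-- The sum of `f` over the indices of `W`, each counted with sign `+`. -/
def unsignedSum (W : Multiset (ι × ℤˣ)) (f : ι → ℝ) : ℝ := (W.map fun w => f w.1).sum

@[simp] lemma signedSum_zero (f : ι → ℝ) : signedSum 0 f = 0 := by simp [signedSum]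

@[simp] lemma signedSum_cons (w : ι × ℤˣ) (W : Multiset (ι × ℤˣ)) (f : ι → ℝ) :
    signedSum (w ::ₘ W) f = (w.2 : ℤ) * f w.1 + signedSum W f := by simp [signedSum]

@[simp] lemma unsignedSum_cons (w : ι × ℤˣ) (W : Multiset (ι × ℤˣ)) (f : ι → ℝ) :
    unsignedSum (w ::ₘ W) f = f w.1 + unsignedSum W f := by simp [unsignedSum]

lemma abs_sign_mul (e : ℤˣ) (x : ℝ) : |(e : ℤ) * x| = |x| := by
  rw [abs_mul, abs_unit_intCast, one_mul]

lemma unsignedSum_one (W : Multiset (ι × ℤˣ)) : unsignedSum W (fun _ => 1) = W.card := by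
  simp [unsignedSum]

lemma unsignedSum_mono (W : Multiset (ι × ℤˣ)) {f g : ι → ℝ} (hfg : ∀ i, f i ≤ g i) :
    unsignedSum W f ≤ unsignedSum W g :=
  Multiset.sum_map_le_sum_map _ _ fun w _ => hfg w.1

lemma unsignedSum_nonneg (W : Multiset (ι × ℤˣ)) {f : ι → ℝ} (hf : ∀ i, 0 ≤ f i) :
    0 ≤ unsignedSum W f := by
  simpa [unsignedSum] using unsignedSum_mono W hf

lemma abs_signedSum_le (W : Multiset (ι × ℤˣ)) {f g : ι → ℝ} (hfg : ∀ i, |f i| ≤ g i) :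
    |signedSum W f| ≤ unsignedSum W g :=
  calc |signedSum W f| ≤ unsignedSum W fun i => |f i| := by
        simpa only [signedSum, unsignedSum, Multiset.map_map, Function.comp_def, abs_sign_mul] using
          Multiset.abs_sum_le_sum_abs (s := W.map fun w => ((w.2 : ℤ) : ℝ) * f w.1)
    _ ≤ unsignedSum W g := unsignedSum_mono W hfg

lemma exists_int_eq_signedSum (W : Multiset (ι × ℤˣ)) (f : ι → ℤ) :
    ∃ n : ℤ, signedSum W (fun i => (f i : ℝ)) = n := by
  induction W using Multiset.induction with
  | empty => exact ⟨0, by simp⟩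
  | cons w W ih =>
    obtain ⟨n, hn⟩ := ih
    exact ⟨w.2 * f w.1 + n, by simp [hn]⟩

lemma exists_eq_cons_forall_le (W : Multiset ι) (hW : W ≠ 0) (f : ι → ℝ) :
    ∃ a R, W = a ::ₘ R ∧ ∀ w ∈ W, f w ≤ f a := by
  classical
  obtain ⟨a, ha, hmax⟩ := W.toFinset.exists_max_image f (Multiset.toFinset_nonempty.2 hW)
  obtain ⟨R, rfl⟩ := Multiset.exists_cons_of_mem (Multiset.mem_toFinset.1 ha)
  exact ⟨a, R, rfl, fun w hw => hmax w (Multiset.mem_toFinset.2 hw)⟩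

lemma exists_eq_cons_cons_forall_le (W : Multiset ι) (hW : 2 ≤ W.card) (f : ι → ℝ) :
    ∃ a b R, W = a ::ₘ b ::ₘ R ∧ (∀ w ∈ W, f w ≤ f a) ∧ ∀ w ∈ R, f w ≤ f b := by
  obtain ⟨a, V, rfl, ha⟩ := exists_eq_cons_forall_le W (by rintro rfl; simp at hW) f
  obtain ⟨b, R, rfl, hb⟩ := exists_eq_cons_forall_le V (by rintro rfl; simp at hW) f
  exact ⟨a, b, R, rfl, ha, fun w hw => hb w (Multiset.mem_cons_of_mem hw)⟩

end SignedSums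

/-- The momentum of a signed multiset of modes. -/
def momentum (W : Multiset (ℤ × ℤˣ)) : ℝ := signedSum W fun i => (i : ℝ)

/-- Near resonance of a signed multiset of modes for the frequencies `i²`. The threshold `10` leaves
room for a bounded perturbation of each frequency. -/
def IsNearResonant (W : Multiset (ℤ × ℤˣ)) : Prop :=
  |signedSum W fun i => (i : ℝ) ^ 2| ≤ 10 * W.card

/-- The Gevrey cost `∑ ⟨i⟩^θ - 2⟨j⟩^θ + |π|` of the signed multiset of modes `W` at the mode `j`:
the exponent of the estimate without the factor `-σ`. -/
noncomputable def gevreyExcess (θ : ℝ) (W : Multiset (ℤ × ℤˣ)) (j : ℤ) : ℝ :=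
  unsignedSum W (jap · ^ θ) - 2 * jap j ^ θ + |momentum W|

lemma abs_momentum_eq_zero_or_one_le (W : Multiset (ℤ × ℤˣ)) :
    |momentum W| = 0 ∨ 1 ≤ |momentum W| := by
  obtain ⟨n, hn⟩ := exists_int_eq_signedSum W fun i => i
  rw [momentum, hn]
  rcases eq_or_ne n 0 with rfl | h
  · simp
  · exact Or.inr (by exact_mod_cast Int.one_le_abs h)

section LargestTwo

variable {θ : ℝ} {a b : ℤ × ℤˣ} {R : Multiset (ℤ × ℤˣ)}

lemma jap_rpow_le_of_momentum (hθ0 : 0 ≤ θ) (hθ1 : θ ≤ 1) (hb : ∀ w ∈ R, jap w.1 ≤ jap b.1) :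
    jap a.1 ^ θ ≤ jap b.1 ^ θ + θ * unsignedSum R (jap · ^ θ) +
      θ * |momentum (a ::ₘ b ::ₘ R)| := by
  set P := momentum (a ::ₘ b ::ₘ R) with hP
  set X := jap b.1 + unsignedSum R jap
  have hX : 1 ≤ X := by
    linarith [one_le_jap b.1, unsignedSum_nonneg R fun i => (jap_pos i).le]
  have ha : jap a.1 ≤ X + |P| := by
    refine max_le ?_ (by linarith [abs_nonneg P])
    calc |(a.1 : ℝ)| = |P - ((b.2 : ℤ) * b.1 + signedSum R fun i => (i : ℝ))| := by
          rw [hP, momentum, signedSum_cons, signedSum_cons, add_sub_cancel_right,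
            abs_sign_mul]
      _ ≤ |P| + (|(b.2 : ℤ) * (b.1 : ℝ)| + |signedSum R fun i => (i : ℝ)|) :=
          (abs_sub _ _).trans (by gcongr; exact abs_add_le _ _)
      _ ≤ |P| + X := by
          rw [abs_sign_mul]
          gcongr
          exact add_le_add (abs_le_jap _) (abs_signedSum_le R abs_le_jap)
      _ = X + |P| := add_comm _ _
  have hR : X ^ θ ≤ jap b.1 ^ θ + θ * unsignedSum R (jap · ^ θ) := by
    simpa only [X, unsignedSum, Multiset.map_map, Function.comp_def] using
      rpow_add_multiset_sum_le hθ0 hθ1 (R.map fun w => jap w.1) (x := jap b.1) fun y hy => by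
        obtain ⟨w, hw, rfl⟩ := Multiset.mem_map.1 hy
        exact ⟨jap_pos w.1, hb w hw⟩
  calc jap a.1 ^ θ ≤ (X + |P|) ^ θ := by gcongr; exact (jap_pos _).le
    _ ≤ X ^ θ + θ * (X ^ (θ - 1) * |P|) :=
        rpow_add_le_add_mul_rpow_sub_one hθ0 hθ1 (by linarith) (by linarith [abs_nonneg P])
    _ ≤ X ^ θ + θ * (1 * |P|) := by
        gcongr; exact Real.rpow_le_one_of_one_le_of_nonpos hX (by linarith)
    _ ≤ jap b.1 ^ θ + θ * unsignedSum R (jap · ^ θ) + θ * |P| := by rw [one_mul]; gcongr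

lemma abs_add_abs_le_of_near_resonant (hne : ¬(a.1 = b.1 ∧ a.2 = -b.2))
    (hres : IsNearResonant (a ::ₘ b ::ₘ R)) :
    |(a.1 : ℝ)| + |(b.1 : ℝ)| ≤
      20 + |momentum (a ::ₘ b ::ₘ R)| + 12 * unsignedSum R (jap · ^ 2) := by
  have hpair : |(a.1 : ℝ)| + |(b.1 : ℝ)| ≤
      |(a.2 : ℤ) * (a.1 : ℝ) ^ 2 + (b.2 : ℤ) * (b.1 : ℝ) ^ 2| +
        |(a.2 : ℤ) * (a.1 : ℝ) + (b.2 : ℤ) * (b.1 : ℝ)| := by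
    exact_mod_cast abs_add_abs_le_of_not_cancel hne
  have hquad : |signedSum R fun i => (i : ℝ) ^ 2| ≤ unsignedSum R (jap · ^ 2) :=
    abs_signedSum_le R fun i => by rw [abs_pow]; gcongr; exact abs_le_jap i
  have hlin : |signedSum R fun i => (i : ℝ)| ≤ unsignedSum R (jap · ^ 2) :=
    abs_signedSum_le R fun i => (abs_le_jap i).trans (le_self_pow₀ (one_le_jap i) two_ne_zero)
  have hcard : (R.card : ℝ) ≤ unsignedSum R (jap · ^ 2) := by
    rw [← unsignedSum_one]
    exact unsignedSum_mono R fun i => one_le_pow₀ (one_le_jap i)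
  have htri_quad := abs_sub_abs_le_abs_add
    ((a.2 : ℤ) * (a.1 : ℝ) ^ 2 + (b.2 : ℤ) * (b.1 : ℝ) ^ 2) (signedSum R fun i => (i : ℝ) ^ 2)
  have htri_lin := abs_sub_abs_le_abs_add
    ((a.2 : ℤ) * (a.1 : ℝ) + (b.2 : ℤ) * (b.1 : ℝ)) (signedSum R fun i => (i : ℝ))
  simp only [IsNearResonant, momentum, signedSum_cons, ← add_assoc, Multiset.card_cons,
    Nat.cast_add, Nat.cast_one] at hres ⊢
  linarith

lemma one_le_unsignedSum_add_abs_momentum (hθ : 0 ≤ θ)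
    (hneutral : signedSum (a ::ₘ b ::ₘ R) (fun _ => 1) = 0)
    (hne : ¬(a.1 = b.1 ∧ a.2 = -b.2)) :
    1 ≤ unsignedSum R (jap · ^ θ) + |momentum (a ::ₘ b ::ₘ R)| := by
  rcases R.empty_or_exists_mem with rfl | ⟨w, hw⟩
  · have hsign : a.2 = -b.2 := by
      simp only [signedSum_cons, signedSum_zero, mul_one, add_zero] at hneutral
      exact Units.ext (by rw [Units.val_neg]; exact eq_neg_of_add_eq_zero_left (by
        exact_mod_cast hneutral))
    have hP : momentum (a ::ₘ b ::ₘ 0) = (a.2 : ℤ) * ((a.1 - b.1 : ℤ) : ℝ) := by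
      simp only [momentum, signedSum_cons, signedSum_zero, hsign]
      push_cast
      ring
    rw [hP, abs_sign_mul, unsignedSum, Multiset.map_zero, Multiset.sum_zero, zero_add]
    exact_mod_cast Int.one_le_abs (sub_ne_zero.2 fun hab => hne ⟨hab, hsign⟩)
  · have hcard : (1 : ℝ) ≤ R.card := by
      exact_mod_cast Multiset.card_pos_iff_exists_mem.2 ⟨w, hw⟩
    have hmono : (R.card : ℝ) ≤ unsignedSum R (jap · ^ θ) := by
      rw [← unsignedSum_one]
      exact unsignedSum_mono R fun i => Real.one_le_rpow (one_le_jap i) hθ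
    linarith [abs_nonneg (momentum (a ::ₘ b ::ₘ R))]

lemma unsignedSum_sq_rpow_le (hθ0 : 0 < θ) (hθ1 : θ ≤ 2) (R : Multiset (ℤ × ℤˣ)) :
    unsignedSum R (jap · ^ 2) ^ (θ / 2) ≤ unsignedSum R (jap · ^ θ) := by
  have hpow (i : ℤ) : (jap i ^ 2) ^ (θ / 2) = jap i ^ θ := by
    rw [← Real.rpow_natCast_mul (jap_pos i).le]; congr 1; push_cast; ring
  calc unsignedSum R (jap · ^ 2) ^ (θ / 2)
      ≤ ((R.map fun w => jap w.1 ^ 2).map (· ^ (θ / 2))).sum :=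
        multiset_sum_rpow_le (half_pos hθ0) (by linarith) _ fun y hy => by
          obtain ⟨w, -, rfl⟩ := Multiset.mem_map.1 hy
          positivity
    _ = unsignedSum R (jap · ^ θ) := by
        simp only [unsignedSum, Multiset.map_map, Function.comp_apply, hpow]

lemma signedSum_cons_cons_le_of_near_resonant (hθ0 : 0 < θ) (hθ1 : θ ≤ 1)
    (hneutral : signedSum (a ::ₘ b ::ₘ R) (fun _ => 1) = 0)
    (hres : IsNearResonant (a ::ₘ b ::ₘ R))
    {h : ℤ → ℝ} (hh : ∀ i, |h i| ≤ jap i ^ (θ / 2)) :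
    signedSum (a ::ₘ b ::ₘ R) h ≤
      13 * (unsignedSum R (jap · ^ θ) + |momentum (a ::ₘ b ::ₘ R)|) := by
  have hR : signedSum R h ≤ unsignedSum R (jap · ^ θ) :=
    (le_abs_self _).trans <| abs_signedSum_le R fun i =>
      (hh i).trans (Real.rpow_le_rpow_of_exponent_le (one_le_jap i) (by linarith))
  have hR0 : 0 ≤ unsignedSum R (jap · ^ θ) :=
    unsignedSum_nonneg R fun i => (Real.rpow_pos_of_pos (jap_pos i) θ).le
  by_cases hne : a.1 = b.1 ∧ a.2 = -b.2
  · have hcancel : signedSum (a ::ₘ b ::ₘ R) h = signedSum R h := by simp [hne.1, hne.2]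
    linarith [abs_nonneg (momentum (a ::ₘ b ::ₘ R))]
  · have hone := one_le_unsignedSum_add_abs_momentum hθ0.le hneutral hne
    have hleading := abs_add_abs_le_of_near_resonant hne hres
    have hpair := rpow_add_rpow_le_of_add_le (half_pos hθ0) (by linarith) (jap_pos a.1).le
      (jap_pos b.1).le (abs_momentum_eq_zero_or_one_le _)
      (unsignedSum_nonneg R fun i => sq_nonneg (jap i))
      (by linarith [jap_le_abs_add_one a.1, jap_le_abs_add_one b.1])
    have htail := unsignedSum_sq_rpow_le hθ0 (by linarith) R
    have hterm (w : ℤ × ℤˣ) : (w.2 : ℤ) * h w.1 ≤ jap w.1 ^ (θ / 2) :=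
      (le_abs_self _).trans ((abs_sign_mul _ _).trans_le (hh w.1))
    rw [signedSum_cons, signedSum_cons]
    -- The constant `13` rounds up `6.64 + 4.9 + 1`, where the last summand comes from `hR`.
    linarith [hterm a, hterm b, abs_nonneg (momentum (a ::ₘ b ::ₘ R))]

lemma one_sub_mul_le_gevreyExcess (hθ0 : 0 ≤ θ) (hθ1 : θ ≤ 1) (hb : ∀ w ∈ R, jap w.1 ≤ jap b.1)
    {j : ℤ} (hj : jap j ≤ jap a.1) :
    (1 - θ) * (unsignedSum R (jap · ^ θ) + |momentum (a ::ₘ b ::ₘ R)|) ≤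
      gevreyExcess θ (a ::ₘ b ::ₘ R) j := by
  have ha := jap_rpow_le_of_momentum (a := a) hθ0 hθ1 hb
  have hja : jap j ^ θ ≤ jap a.1 ^ θ := by gcongr; exact (jap_pos j).le
  rw [gevreyExcess, unsignedSum_cons, unsignedSum_cons]
  linarith

end LargestTwo

section GevreyExcess

variable {θ : ℝ} {W : Multiset (ℤ × ℤˣ)} {w : ℤ × ℤˣ}

lemma gevreyExcess_nonneg (hθ0 : 0 ≤ θ) (hθ1 : θ ≤ 1) (hW : 2 ≤ W.card) (hw : w ∈ W) :
    0 ≤ gevreyExcess θ W w.1 := by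
  obtain ⟨a, b, R, rfl, ha, hb⟩ := exists_eq_cons_cons_forall_le W hW fun w => jap w.1
  have hR : 0 ≤ unsignedSum R (jap · ^ θ) :=
    unsignedSum_nonneg R fun i => (Real.rpow_pos_of_pos (jap_pos i) θ).le
  exact (mul_nonneg (sub_nonneg.2 hθ1) (add_nonneg hR (abs_nonneg _))).trans
    (one_sub_mul_le_gevreyExcess hθ0 hθ1 hb (ha w hw))

lemma signedSum_le_of_near_resonant (hθ0 : 0 < θ) (hθ1 : θ < 1) (hW : 2 ≤ W.card) (hw : w ∈ W)
    (hneutral : signedSum W (fun _ => 1) = 0)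
    (hres : IsNearResonant W) {h : ℤ → ℝ} (hh : ∀ i, |h i| ≤ jap i ^ (θ / 2)) :
    signedSum W h ≤ 13 / (1 - θ) * gevreyExcess θ W w.1 := by
  obtain ⟨a, b, R, rfl, ha, hb⟩ := exists_eq_cons_cons_forall_le W hW fun w => jap w.1
  have hθ : 0 < 1 - θ := sub_pos.2 hθ1
  have hexcess := one_sub_mul_le_gevreyExcess hθ0.le hθ1.le hb (ha w hw)
  calc signedSum (a ::ₘ b ::ₘ R) h
      ≤ 13 * (unsignedSum R (jap · ^ θ) + |momentum (a ::ₘ b ::ₘ R)|) :=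
        signedSum_cons_cons_le_of_near_resonant hθ0 hθ1.le hneutral hres hh
    _ = 13 / (1 - θ) * ((1 - θ) * (unsignedSum R (jap · ^ θ) +
          |momentum (a ::ₘ b ::ₘ R)|)) := by field_simp
    _ ≤ 13 / (1 - θ) * gevreyExcess θ (a ::ₘ b ::ₘ R) w.1 := by gcongr

end GevreyExcess

section OccupationNumbers

variable (α β : ℤ →₀ ℕ)

/-- The modes of `α` with sign `+` and those of `β` with sign `-`, repeated according to their
occupation numbers. Modes common to `α` and `β` are not cancelled. -/
noncomputable def signedIndices : Multiset (ℤ × ℤˣ) :=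
  α.toMultiset.map (·, 1) + β.toMultiset.map (·, -1)

/-- The integer vector `α - β` of differences of occupation numbers. -/
noncomputable def occupationDiff : ℤ →₀ ℤ :=
  α.mapRange Nat.cast Nat.cast_zero - β.mapRange Nat.cast Nat.cast_zero

lemma occupationDiff_apply (i : ℤ) : occupationDiff α β i = α i - β i := rfl

lemma support_occupationDiff_subset : (occupationDiff α β).support ⊆ α.support ∪ β.support := by
  intro i hi
  contrapose! hi
  simp_all [occupationDiff_apply]

variable {α β}

lemma occupationDiff_ne_zero (hne : α ≠ β) : occupationDiff α β ≠ 0 := by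
  refine fun h => hne (Finsupp.ext fun i => ?_)
  have hi : (α i : ℤ) - β i = 0 := DFunLike.congr_fun h i
  omega

lemma sum_map_toMultiset {s : Finset ℤ} (hs : α.support ⊆ s) (f : ℤ → ℝ) :
    (α.toMultiset.map f).sum = ∑ i ∈ s, α i * f i := by
  rw [Finset.sum_multiset_map_count, Finsupp.toFinset_toMultiset]
  simp only [Finsupp.count_toMultiset, nsmul_eq_mul]
  exact Finset.sum_subset hs fun i _ hi => by simp [Finsupp.notMem_support_iff.1 hi]

lemma signedSum_signedIndices (f : ℤ → ℝ) :
    signedSum (signedIndices α β) f =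
      ∑ i ∈ α.support ∪ β.support, f i * ((α i : ℝ) - (β i : ℝ)) := by
  simp only [signedSum, signedIndices, Multiset.map_add, Multiset.sum_add, Multiset.map_map,
    Function.comp_def]
  rw [sum_map_toMultiset Finset.subset_union_left, sum_map_toMultiset Finset.subset_union_right,
    ← Finset.sum_add_distrib]
  refine Finset.sum_congr rfl fun i _ => ?_
  push_cast
  ring

lemma unsignedSum_signedIndices (f : ℤ → ℝ) :
    unsignedSum (signedIndices α β) f =
      ∑ i ∈ α.support ∪ β.support, f i * ((α i : ℝ) + (β i : ℝ)) := by
  simp only [unsignedSum, signedIndices, Multiset.map_add, Multiset.sum_add, Multiset.map_map,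
    Function.comp_def]
  rw [sum_map_toMultiset Finset.subset_union_left, sum_map_toMultiset Finset.subset_union_right,
    ← Finset.sum_add_distrib]
  exact Finset.sum_congr rfl fun i _ => by ring

lemma signedSum_signedIndices_eq_sum_occupationDiff (f : ℤ → ℝ) :
    signedSum (signedIndices α β) f =
      ∑ i ∈ (occupationDiff α β).support, f i * (occupationDiff α β i : ℝ) := by
  rw [signedSum_signedIndices,
    Finset.sum_subset (support_occupationDiff_subset α β) fun i _ hi => by
      rw [Finsupp.notMem_support_iff.1 hi, Int.cast_zero, mul_zero]]
  simp only [occupationDiff_apply, Int.cast_sub, Int.cast_natCast]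

lemma card_toMultiset_eq (hmass : (α.sum fun _ n => n) = β.sum fun _ n => n) :
    α.toMultiset.card = β.toMultiset.card := by
  rw [Finsupp.card_toMultiset, Finsupp.card_toMultiset]
  exact hmass

lemma signedSum_signedIndices_one (hmass : (α.sum fun _ n => n) = β.sum fun _ n => n) :
    signedSum (signedIndices α β) (fun _ => 1) = 0 := by
  simp [signedSum, signedIndices, card_toMultiset_eq hmass]

lemma two_le_card_signedIndices (hne : α ≠ β)
    (hmass : (α.sum fun _ n => n) = β.sum fun _ n => n) : 2 ≤ (signedIndices α β).card := by
  have hcard := card_toMultiset_eq hmass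
  have hpos : α.toMultiset.card ≠ 0 := fun hα => hne <| Finsupp.orderIsoMultiset.injective <|
    (Multiset.card_eq_zero.1 hα).trans (Multiset.card_eq_zero.1 (hcard ▸ hα)).symm
  simp only [signedIndices, Multiset.card_add, Multiset.card_map]
  omega

lemma exists_mem_signedIndices {j : ℤ} (hj : 1 ≤ α j + β j) :
    ∃ w ∈ signedIndices α β, w.1 = j := by
  rcases Nat.eq_zero_or_pos (α j) with hα | hα
  · exact ⟨(j, -1), Multiset.mem_add.2 (.inr (Multiset.mem_map_of_mem _
      ((Finsupp.mem_toMultiset β j).2 (Finsupp.mem_support_iff.2 (by omega))))), rfl⟩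
  · exact ⟨(j, 1), Multiset.mem_add.2 (.inl (Multiset.mem_map_of_mem _
      ((Finsupp.mem_toMultiset α j).2 (Finsupp.mem_support_iff.2 hα.ne')))), rfl⟩

lemma gevreyExcess_signedIndices (θ : ℝ) (j : ℤ) :
    gevreyExcess θ (signedIndices α β) j =
      (∑ i ∈ α.support ∪ β.support, jap i ^ θ * ((α i : ℝ) + (β i : ℝ))) - 2 * jap j ^ θ +
        |∑ i ∈ α.support ∪ β.support, (i : ℝ) * ((α i : ℝ) - (β i : ℝ))| := by
  rw [gevreyExcess, momentum, unsignedSum_signedIndices, signedSum_signedIndices]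

lemma sum_abs_occupationDiff_le_of_near_resonant {θ : ℝ} (hθ0 : 0 < θ) (hθ1 : θ < 1)
    (hne : α ≠ β) (hmass : (α.sum fun _ n => n) = β.sum fun _ n => n)
    (hres : IsNearResonant (signedIndices α β)) {j : ℤ} (hj : 1 ≤ α j + β j) :
    ∑ i ∈ (occupationDiff α β).support, |(occupationDiff α β i : ℝ)| * jap i ^ (θ / 2) ≤
      13 / (1 - θ) * gevreyExcess θ (signedIndices α β) j := by
  obtain ⟨w, hw, rfl⟩ := exists_mem_signedIndices hj
  -- The test function carries the signs of `α - β`, so common modes need not be cancelled first.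
  let h (i : ℤ) : ℝ := SignType.sign (occupationDiff α β i : ℝ) * jap i ^ (θ / 2)
  have hh (i : ℤ) : |h i| ≤ jap i ^ (θ / 2) := by
    have hpow : 0 ≤ jap i ^ (θ / 2) := (Real.rpow_pos_of_pos (jap_pos i) _).le
    rw [abs_mul, abs_of_nonneg hpow]
    refine mul_le_of_le_one_left hpow ?_
    rcases lt_trichotomy (occupationDiff α β i : ℝ) 0 with hi | hi | hi <;> simp [hi]
  calc ∑ i ∈ (occupationDiff α β).support, |(occupationDiff α β i : ℝ)| * jap i ^ (θ / 2)
      = signedSum (signedIndices α β) h := by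
        rw [signedSum_signedIndices_eq_sum_occupationDiff]
        refine Finset.sum_congr rfl fun i _ => ?_
        rw [← sign_mul_self]
        ring
    _ ≤ 13 / (1 - θ) * gevreyExcess θ (signedIndices α β) w.1 :=
        signedSum_le_of_near_resonant hθ0 hθ1 (two_le_card_signedIndices hne hmass) hw
          (signedSum_signedIndices_one hmass) hres hh

end OccupationNumbers

lemma log_one_add_sq_mul_rpow_le {p x m : ℝ} (hp : 0 ≤ p) (hx : 1 ≤ x) (hm : 1 ≤ m) :
    Real.log (1 + x ^ 2 * m ^ p) ≤ 1 + 2 * Real.log x + p * Real.log m := by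
  have hm0 : 0 < m := one_pos.trans_le hm
  have hone : 1 ≤ x ^ 2 * m ^ p := one_le_mul_of_one_le_of_one_le (one_le_pow₀ hx)
    (Real.one_le_rpow hm hp)
  calc Real.log (1 + x ^ 2 * m ^ p) ≤ Real.log (2 * (x ^ 2 * m ^ p)) :=
        Real.log_le_log (by positivity) (by linarith)
    _ = Real.log 2 + (2 * Real.log x + p * Real.log m) := by
        rw [Real.log_mul two_ne_zero (by positivity), Real.log_mul (by positivity) (by positivity),
          Real.log_pow, Real.log_rpow hm0, Nat.cast_ofNat]
    _ ≤ 1 + 2 * Real.log x + p * Real.log m := by linarith [Real.log_two_lt_d9]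

lemma log_le_two_mul_div {B y : ℝ} (hB : 0 < B) (hy0 : 0 < y) (hy : B * Real.log B ≤ y) :
    Real.log y ≤ 2 * (y / B) := by
  have hquot := Real.log_le_sub_one_of_pos (div_pos hy0 hB)
  have hlogB : Real.log B ≤ y / B := (le_div_iff₀' hB).2 hy
  rw [Real.log_div hy0.ne' hB.ne'] at hquot
  linarith

/-- The base `8(q+3)/(θδ)` of the mode cutoff. -/
noncomputable def cutoffBase (q θ δ : ℝ) : ℝ := 8 * (q + 3) / (θ * δ)

/-- The mode `(B log B)^{2/θ}`, with `B = 8(q+3)/(θδ)`, beyond which the small-divisor factor at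
mode `n` with coefficient `x` is absorbed by `exp (δ x ⟨n⟩^{θ/2})`. -/
noncomputable def modeCutoff (q θ δ : ℝ) : ℝ :=
  (cutoffBase q θ δ * Real.log (cutoffBase q θ δ)) ^ (2 / θ)

section LogarithmicSum

variable {q θ δ : ℝ}

lemma eight_le_cutoffBase_mul (hq : -2 ≤ q) (hθ0 : 0 < θ) (hθ1 : θ ≤ 1) (hδ : 0 < δ) :
    8 ≤ cutoffBase q θ δ * δ :=
  calc (8 : ℝ) ≤ 8 * (q + 3) := by linarith
    _ ≤ 8 * (q + 3) / θ := le_div_self (by linarith) hθ0 hθ1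
    _ = cutoffBase q θ δ * δ := by rw [cutoffBase]; field_simp

lemma eight_le_cutoffBase (hq : -2 ≤ q) (hθ0 : 0 < θ) (hθ1 : θ ≤ 1) (hδ0 : 0 < δ) (hδ1 : δ ≤ 1) :
    8 ≤ cutoffBase q θ δ := by
  have hmul := eight_le_cutoffBase_mul hq hθ0 hθ1 hδ0
  have hpos : 0 < cutoffBase q θ δ := pos_of_mul_pos_left (by linarith) hδ0.le
  exact hmul.trans (mul_le_of_le_one_right hpos.le hδ1)

lemma one_le_log_of_eight_le {B : ℝ} (hB : 8 ≤ B) : 1 ≤ Real.log B :=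
  (Real.le_log_iff_exp_le (by linarith)).2 (by linarith [Real.exp_one_lt_d9])

lemma log_le_of_modeCutoff_lt (hq : -2 ≤ q) (hθ0 : 0 < θ) (hθ1 : θ ≤ 1) (hδ0 : 0 < δ)
    (hδ1 : δ ≤ 1) {x m : ℝ} (hx : 1 ≤ x) (hm : modeCutoff q θ δ < m) :
    Real.log (1 + x ^ 2 * m ^ (2 + q)) ≤ δ * (x * m ^ (θ / 2)) := by
  have hB := eight_le_cutoffBase hq hθ0 hθ1 hδ0 hδ1
  have hBδ := eight_le_cutoffBase_mul hq hθ0 hθ1 hδ0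
  have hlogB := one_le_log_of_eight_le hB
  set B := cutoffBase q θ δ with hBdef
  have hm1 : 1 ≤ m := hm.le.trans' (Real.one_le_rpow (by nlinarith) (by positivity))
  set y := m ^ (θ / 2) with hy
  have hBy : B * Real.log B ≤ y := by
    rw [hy, ← inv_div, Real.le_rpow_inv_iff_of_pos (by nlinarith) (by linarith) (by positivity)]
    exact hm.le
  have hlogm : (2 + q) * Real.log m ≤ δ * y / 2 :=
    calc (2 + q) * Real.log m = 2 * (2 + q) / θ * Real.log y := by
          rw [hy, Real.log_rpow (by linarith)]; field_simp
      _ ≤ 2 * (2 + q) / θ * (2 * (y / B)) := by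
          have hq2 : 0 ≤ 2 + q := by linarith
          gcongr
          exact log_le_two_mul_div (by linarith) (by positivity) hBy
      _ = (2 + q) / (q + 3) * (δ * y / 2) := by
          have hq3 : q + 3 ≠ 0 := by linarith
          rw [hBdef, cutoffBase]; field_simp; ring
      _ ≤ δ * y / 2 :=
          mul_le_of_le_one_left (by positivity) ((div_le_one₀ (by linarith)).2 (by linarith))
  have hδy : 8 ≤ δ * y := by nlinarith
  have hlogx := Real.log_le_sub_one_of_pos (one_pos.trans_le hx)
  have hlog := log_one_add_sq_mul_rpow_le (show 0 ≤ 2 + q by linarith) hx hm1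
  nlinarith

lemma log_le_of_le_modeCutoff (hq : -2 ≤ q) (hθ0 : 0 < θ) (hθ1 : θ ≤ 1) (hδ0 : 0 < δ)
    (hδ1 : δ ≤ 1) {x m : ℝ} (hx : 1 ≤ x) (hm1 : 1 ≤ m) (hm : m ≤ modeCutoff q θ δ) :
    Real.log (1 + x ^ 2 * m ^ (2 + q)) ≤
      δ * (x * m ^ (θ / 2)) + 4 * (q + 3) / θ * Real.log (cutoffBase q θ δ) := by
  have hB := eight_le_cutoffBase hq hθ0 hθ1 hδ0 hδ1
  have hBδ := eight_le_cutoffBase_mul hq hθ0 hθ1 hδ0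
  have hlogB := one_le_log_of_eight_le hB
  rw [modeCutoff] at hm
  set B := cutoffBase q θ δ
  have hlogm : Real.log m ≤ 4 / θ * Real.log B :=
    calc Real.log m ≤ Real.log ((B * Real.log B) ^ (2 / θ)) := Real.log_le_log (by linarith) hm
      _ = 2 / θ * (Real.log B + Real.log (Real.log B)) := by
          rw [Real.log_rpow (by positivity), Real.log_mul (by linarith) (by linarith)]
      _ ≤ 2 / θ * (Real.log B + Real.log B) := by
          gcongr; exact Real.log_le_self (by linarith)
      _ = 4 / θ * Real.log B := by ring
  have hlogx : 2 * Real.log x ≤ δ * x - 2 + 2 * Real.log B := by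
    have hxB : x ≤ δ * x / 2 * B := by nlinarith
    have hsplit := Real.log_le_log (by linarith) hxB
    rw [Real.log_mul (by positivity) (by linarith)] at hsplit
    linarith [Real.log_le_sub_one_of_pos (show 0 < δ * x / 2 by positivity)]
  have hx_le : δ * x ≤ δ * (x * m ^ (θ / 2)) := by
    gcongr; exact le_mul_of_one_le_right (by linarith) (Real.one_le_rpow hm1 (by positivity))
  have hθ4 : 4 ≤ 4 / θ := le_div_self (by norm_num) hθ0 hθ1
  calc Real.log (1 + x ^ 2 * m ^ (2 + q))
      ≤ 1 + 2 * Real.log x + (2 + q) * Real.log m :=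
        log_one_add_sq_mul_rpow_le (by linarith) hx hm1
    _ ≤ 1 + (δ * x - 2 + 2 * Real.log B) + (2 + q) * (4 / θ * Real.log B) := by
        gcongr; linarith
    _ ≤ δ * (x * m ^ (θ / 2)) + 4 / θ * Real.log B + (2 + q) * (4 / θ * Real.log B) := by
        nlinarith
    _ = δ * (x * m ^ (θ / 2)) + 4 * (q + 3) / θ * Real.log B := by ring

lemma sum_log_le (hq : -2 ≤ q) (hθ0 : 0 < θ) (hθ1 : θ ≤ 1) (hδ0 : 0 < δ) (hδ1 : δ ≤ 1)
    (F : Finset ℤ) (x : ℤ → ℝ) (hx : ∀ n ∈ F, 1 ≤ x n) :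
    ∑ n ∈ F, Real.log (1 + x n ^ 2 * jap n ^ (2 + q)) ≤
      δ * ∑ n ∈ F, x n * jap n ^ (θ / 2) +
        12 * θ⁻¹ * (q + 3) * (modeCutoff q θ δ * Real.log (cutoffBase q θ δ)) := by
  have hB := eight_le_cutoffBase hq hθ0 hθ1 hδ0 hδ1
  have hlogB := one_le_log_of_eight_le hB
  have hM : 1 ≤ modeCutoff q θ δ := Real.one_le_rpow (by nlinarith) (by positivity)
  set K := 4 * (q + 3) / θ * Real.log (cutoffBase q θ δ) with hK
  have hK0 : 0 ≤ K := mul_nonneg (div_nonneg (by linarith) hθ0.le) (by linarith)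
  calc ∑ n ∈ F, Real.log (1 + x n ^ 2 * jap n ^ (2 + q))
      ≤ ∑ n ∈ F, (δ * (x n * jap n ^ (θ / 2)) + if jap n ≤ modeCutoff q θ δ then K else 0) := by
        refine Finset.sum_le_sum fun n hn => ?_
        split_ifs with hnM
        · exact log_le_of_le_modeCutoff hq hθ0 hθ1 hδ0 hδ1 (hx n hn) (one_le_jap n) hnM
        · rw [add_zero]
          exact log_le_of_modeCutoff_lt hq hθ0 hθ1 hδ0 hδ1 (hx n hn) (not_le.1 hnM)
    _ = δ * ∑ n ∈ F, x n * jap n ^ (θ / 2) +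
          (F.filter fun n => jap n ≤ modeCutoff q θ δ).card * K := by
        rw [Finset.sum_add_distrib, ← Finset.mul_sum, ← Finset.sum_filter, Finset.sum_const,
          nsmul_eq_mul]
    _ ≤ δ * ∑ n ∈ F, x n * jap n ^ (θ / 2) + 3 * modeCutoff q θ δ * K := by
        gcongr; exact card_filter_jap_le F hM
    _ = _ := by rw [hK]; ring

end LogarithmicSum

section Constants

variable {q θ σ A r : ℝ}

/-- The base `8(q+3)C*θ⁻¹` of the Gevrey constant, where `C* = 13/(1-θ)`. -/
noncomputable def gevreyBase (q θ : ℝ) : ℝ := 8 * (q + 3) * (13 / (1 - θ)) * θ⁻¹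

/-- The constant `C₁` of the estimate. -/
noncomputable def gevreyConst (q θ : ℝ) : ℝ :=
  28 * θ⁻¹ * (q + 3) * gevreyBase q θ ^ (2 / θ) * Real.log (gevreyBase q θ) ^ (2 / θ + 1)

lemma log_div_le_log_mul_rpow (hA : Real.exp 3 ≤ A) (hσ0 : 0 < σ) (hσ1 : σ ≤ 1) :
    Real.log (A / σ) ≤ Real.log A * σ ^ (-(1 / 3) : ℝ) := by
  have hA0 : 0 < A := (Real.exp_pos 3).trans_le hA
  have hlogA : 3 ≤ Real.log A := (Real.le_log_iff_exp_le hA0).2 hA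
  have hσ : Real.log (σ ^ (-(1 / 3) : ℝ)) ≤ σ ^ (-(1 / 3) : ℝ) - 1 :=
    Real.log_le_sub_one_of_pos (Real.rpow_pos_of_pos hσ0 _)
  rw [Real.log_rpow hσ0] at hσ
  rw [Real.log_div hA0.ne' hσ0.ne']
  nlinarith [Real.log_nonpos hσ0.le hσ1]

lemma rpow_mul_log_div_le (hA : Real.exp 3 ≤ A) (hσ0 : 0 < σ) (hσ1 : σ ≤ 1) (hr : 2 ≤ r) :
    (A / σ * Real.log (A / σ)) ^ r * Real.log (A / σ) ≤
      A ^ r * Real.log A ^ (r + 1) * σ ^ (-(3 / 2 * r)) := by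
  have hA1 : 1 < A := (Real.one_lt_exp_iff.2 three_pos).trans_le hA
  have hA0 : 0 < A := one_pos.trans hA1
  have hlogA : 0 < Real.log A := Real.log_pos hA1
  have hlog : 0 < Real.log (A / σ) := Real.log_pos (hA1.trans_le (le_div_self hA0.le hσ0 hσ1))
  calc (A / σ * Real.log (A / σ)) ^ r * Real.log (A / σ)
      = A ^ r * σ ^ (-r) * Real.log (A / σ) ^ (r + 1) := by
        rw [Real.mul_rpow (by positivity) hlog.le, Real.div_rpow hA0.le hσ0.le,
          Real.rpow_add_one hlog.ne', Real.rpow_neg hσ0.le]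
        ring
    _ ≤ A ^ r * σ ^ (-r) * (Real.log A * σ ^ (-(1 / 3) : ℝ)) ^ (r + 1) := by
        gcongr; exact log_div_le_log_mul_rpow hA hσ0 hσ1
    _ = A ^ r * Real.log A ^ (r + 1) * σ ^ (-r + -(1 / 3) * (r + 1)) := by
        rw [Real.mul_rpow hlogA.le (by positivity), ← Real.rpow_mul hσ0.le, Real.rpow_add hσ0]
        ring
    _ ≤ A ^ r * Real.log A ^ (r + 1) * σ ^ (-(3 / 2 * r)) := by
        gcongr A ^ r * Real.log A ^ (r + 1) * ?_
        exact Real.rpow_le_rpow_of_exponent_ge hσ0 hσ1 (by linarith)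

lemma exp_three_le_gevreyBase (hq : -2 ≤ q) (hθ0 : 0 < θ) (hθ1 : θ < 1) :
    Real.exp 3 ≤ gevreyBase q θ := by
  have hC : 13 ≤ 13 / (1 - θ) := le_div_self (by norm_num) (by linarith) (by linarith)
  calc Real.exp 3 = Real.exp 1 ^ 3 := by rw [← Real.exp_nat_mul]; norm_num
    _ ≤ 3 ^ 3 := by gcongr; linarith [Real.exp_one_lt_d9]
    _ ≤ 8 * (q + 3) * (13 / (1 - θ)) := by nlinarith
    _ ≤ gevreyBase q θ :=
        le_mul_of_one_le_right (mul_nonneg (by linarith) (by linarith)) ((one_le_inv₀ hθ0).2 hθ1.le)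

lemma one_le_gevreyBase (hq : -2 ≤ q) (hθ0 : 0 < θ) (hθ1 : θ < 1) :
    1 ≤ gevreyBase q θ :=
  (Real.one_le_exp three_pos.le).trans (exp_three_le_gevreyBase hq hθ0 hθ1)

lemma gevreyConst_nonneg (hq : -2 ≤ q) (hθ0 : 0 < θ) (hθ1 : θ < 1) :
    0 ≤ gevreyConst q θ := by
  have hA1 := one_le_gevreyBase hq hθ0 hθ1
  have hlogA := Real.log_nonneg hA1
  have hq3 : 0 ≤ q + 3 := by linarith
  rw [gevreyConst]
  positivity

lemma modeCutoff_mul_log_le (hq : -2 ≤ q) (hθ0 : 0 < θ) (hθ1 : θ < 1)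
    (hσ0 : 0 < σ) (hσ1 : σ ≤ 1) :
    12 * θ⁻¹ * (q + 3) * (modeCutoff q θ (σ / (13 / (1 - θ))) *
        Real.log (cutoffBase q θ (σ / (13 / (1 - θ))))) ≤
      gevreyConst q θ * σ ^ (-(3 / θ)) := by
  have hbase : cutoffBase q θ (σ / (13 / (1 - θ))) = gevreyBase q θ / σ := by
    have hθ : 1 - θ ≠ 0 := (sub_pos.2 hθ1).ne'
    rw [cutoffBase, gevreyBase]; field_simp
  have hA := exp_three_le_gevreyBase hq hθ0 hθ1
  have hA1 := one_le_gevreyBase hq hθ0 hθ1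
  have hlogA := Real.log_nonneg hA1
  have hr : 2 ≤ 2 / θ := le_div_self zero_le_two hθ0 hθ1.le
  have hq3 : 0 ≤ q + 3 := by linarith
  rw [modeCutoff, hbase]
  calc _ ≤ 12 * θ⁻¹ * (q + 3) * (gevreyBase q θ ^ (2 / θ) *
          Real.log (gevreyBase q θ) ^ (2 / θ + 1) * σ ^ (-(3 / 2 * (2 / θ)))) :=
        mul_le_mul_of_nonneg_left (rpow_mul_log_div_le hA hσ0 hσ1 hr) (by positivity)
    _ ≤ 28 * θ⁻¹ * (q + 3) * (gevreyBase q θ ^ (2 / θ) *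
          Real.log (gevreyBase q θ) ^ (2 / θ + 1) * σ ^ (-(3 / 2 * (2 / θ)))) := by
        gcongr; norm_num
    _ = gevreyConst q θ * σ ^ (-(3 / θ)) := by
        rw [gevreyConst, show 3 / 2 * (2 / θ) = 3 / θ by ring]; ring

end Constants

/-- The Diophantine condition with constant `γ` and exponent `q` on the frequency vector `ω`. -/
def IsDiophantine (γ q : ℝ) (ω : ℤ → ℝ) : Prop :=
  ∀ ℓ : ℤ →₀ ℤ, ℓ ≠ 0 →
    γ * ∏ n ∈ ℓ.support, (1 + (ℓ n : ℝ) ^ 2 * jap n ^ (2 + q))⁻¹ <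
      |∑ n ∈ ℓ.support, ω n * (ℓ n : ℝ)|

lemma IsDiophantine.mul_exp_neg_sum_log_lt {γ q : ℝ} {ω : ℤ → ℝ} (hω : IsDiophantine γ q ω)
    {ℓ : ℤ →₀ ℤ} (hℓ : ℓ ≠ 0) :
    γ * Real.exp (-∑ n ∈ ℓ.support, Real.log (1 + |(ℓ n : ℝ)| ^ 2 * jap n ^ (2 + q))) <
      |∑ n ∈ ℓ.support, ω n * (ℓ n : ℝ)| := by
  have hpos (n : ℤ) : 0 < 1 + (ℓ n : ℝ) ^ 2 * jap n ^ (2 + q) := by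
    have := Real.rpow_pos_of_pos (jap_pos n) (2 + q)
    positivity
  simpa only [sq_abs, ← Finset.sum_neg_distrib, Real.exp_sum, Real.exp_neg,
    Real.exp_log (hpos _)] using hω ℓ hℓ

lemma sub_mul_card_le_abs_signedSum {ι : Type*} (W : Multiset (ι × ℤˣ)) {f g : ι → ℝ} {C K : ℝ}
    (hfg : ∀ i, |f i - g i| ≤ C) (hg : K * W.card ≤ |signedSum W g|) :
    (K - C) * W.card ≤ |signedSum W f| := by
  have hdiff : signedSum W (fun i => f i - g i) = signedSum W f - signedSum W g := by
    simp only [signedSum, mul_sub, Multiset.sum_map_sub]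
  have hle : |signedSum W fun i => f i - g i| ≤ C * W.card :=
    (abs_signedSum_le W hfg).trans_eq (by simp [unsignedSum, mul_comm])
  have htri := abs_sub_abs_le_abs_sub (signedSum W g) (signedSum W f)
  rw [abs_sub_comm, ← hdiff] at htri
  linarith

lemma sum_log_occupationDiff_le_of_near_resonant {q θ σ : ℝ} (hq : -2 ≤ q) (hθ0 : 0 < θ)
    (hθ1 : θ < 1) (hσ0 : 0 < σ) (hσ1 : σ ≤ 1) {α β : ℤ →₀ ℕ} (hne : α ≠ β)
    (hmass : (α.sum fun _ n => n) = β.sum fun _ n => n)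
    (hres : IsNearResonant (signedIndices α β)) {j : ℤ} (hj : 1 ≤ α j + β j) :
    ∑ n ∈ (occupationDiff α β).support,
        Real.log (1 + |(occupationDiff α β n : ℝ)| ^ 2 * jap n ^ (2 + q)) ≤
      σ * gevreyExcess θ (signedIndices α β) j + gevreyConst q θ * σ ^ (-(3 / θ)) := by
  set C := 13 / (1 - θ)
  have hC1 : 1 ≤ C := (one_le_div (by linarith)).2 (by linarith)
  have hx (n : ℤ) (hn : n ∈ (occupationDiff α β).support) : 1 ≤ |(occupationDiff α β n : ℝ)| := by
    exact_mod_cast Int.one_le_abs (Finsupp.mem_support_iff.1 hn)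
  calc _ ≤ σ / C * ∑ n ∈ (occupationDiff α β).support,
            |(occupationDiff α β n : ℝ)| * jap n ^ (θ / 2) +
          12 * θ⁻¹ * (q + 3) * (modeCutoff q θ (σ / C) * Real.log (cutoffBase q θ (σ / C))) :=
        sum_log_le hq hθ0 hθ1.le (by positivity) ((div_le_one₀ (by linarith)).2 (hσ1.trans hC1))
          _ _ hx
    _ ≤ σ / C * (C * gevreyExcess θ (signedIndices α β) j) +
          gevreyConst q θ * σ ^ (-(3 / θ)) := by
        gcongr σ / C * ?_ + ?_
        · exact sum_abs_occupationDiff_le_of_near_resonant hθ0 hθ1 hne hmass hres hj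
        · exact modeCutoff_mul_log_le hq hθ0 hθ1 hσ0 hσ1
    _ = σ * gevreyExcess θ (signedIndices α β) j + gevreyConst q θ * σ ^ (-(3 / θ)) := by
        field_simp

theorem gevrey_small_divisor_estimate_general {q γ θ σ : ℝ} (hq : -2 ≤ q) (hγ0 : 0 ≤ γ)
    (hγ1 : γ ≤ 1) (hθ0 : 0 < θ) (hθ1 : θ < 1) (hσ0 : 0 < σ) (hσ1 : σ ≤ 1) {ω : ℤ → ℝ}
    (hω : ∀ j : ℤ, |ω j - (j : ℝ) ^ 2| ≤ 9) (hdio : IsDiophantine γ q ω)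
    {α β : ℤ →₀ ℕ} (hne : α ≠ β) (hmass : (α.sum fun _ n => n) = β.sum fun _ n => n)
    {j : ℤ} (hj : 1 ≤ α j + β j) :
    γ * Real.exp (-σ *
        ((∑ i ∈ α.support ∪ β.support, jap i ^ θ * ((α i : ℝ) + (β i : ℝ))) - 2 * jap j ^ θ +
          |∑ i ∈ α.support ∪ β.support, (i : ℝ) * ((α i : ℝ) - (β i : ℝ))|)) ≤
      Real.exp (gevreyConst q θ * σ ^ (-(3 / θ))) *
        |∑ i ∈ α.support ∪ β.support, ω i * ((α i : ℝ) - (β i : ℝ))| := by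
  rw [← gevreyExcess_signedIndices, ← signedSum_signedIndices]
  have hcard := two_le_card_signedIndices hne hmass
  set W := signedIndices α β
  by_cases hres : IsNearResonant W
  · have hlog := sum_log_occupationDiff_le_of_near_resonant hq hθ0 hθ1 hσ0 hσ1 hne hmass hres hj
    have hsmall := hdio.mul_exp_neg_sum_log_lt (occupationDiff_ne_zero hne)
    rw [← signedSum_signedIndices_eq_sum_occupationDiff] at hsmall
    grw [← hsmall, mul_left_comm, ← Real.exp_add]
    gcongr
    linarith
  · have hlarge := sub_mul_card_le_abs_signedSum W hω (not_le.1 hres).le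
    obtain ⟨w, hw, rfl⟩ := exists_mem_signedIndices hj
    have hexcess := gevreyExcess_nonneg hθ0.le hθ1.le hcard hw
    calc γ * Real.exp (-σ * gevreyExcess θ W w.1) ≤ 1 * 1 := by
          gcongr
          exact Real.exp_le_one_iff.2 (by nlinarith)
      _ ≤ Real.exp (gevreyConst q θ * σ ^ (-(3 / θ))) * |signedSum W ω| := by
          gcongr
          · exact Real.one_le_exp (mul_nonneg (gevreyConst_nonneg hq hθ0 hθ1) (by positivity))
          · have : (2 : ℝ) ≤ W.card := by exact_mod_cast hcard
            linarith

/-- (Homological-equation small-divisor estimate, Gevrey case.) Under the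
Diophantine conditions on `ω`, with `C* := 13/(1−θ)` and
`C₁ := 28θ⁻¹(q+3)(8(q+3)C*θ⁻¹)^{2/θ}(ln(8(q+3)C*θ⁻¹))^{2/θ+1}`, for all finitely supported
`α ≠ β : ℤ → ℕ` with equal total mass `≥ 1` and every `j` with `α_j + β_j ≥ 1`,
`γ·exp(−σ(∑_i ⟨i⟩^θ(α_i+β_i) − 2⟨j⟩^θ + |π|)) ≤ e^{C₁σ^{−3/θ}}·|∑_i ω_i(α_i−β_i)|`. -/
theorem gevrey_small_divisor_estimate
    (q γ θ σ : ℝ) (hq : 0 ≤ q) (hγ0 : 0 < γ) (hγ1 : γ ≤ 1)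
    (hθ0 : 0 < θ) (hθ1 : θ < 1) (hσ0 : 0 < σ) (hσ1 : σ ≤ 1)
    (ω : ℤ → ℝ)
    (hω : ∀ j : ℤ, |ω j - (j : ℝ) ^ 2| * jap j ^ q ≤ 1 / 2)
    (hdio : ∀ ℓ : ℤ →₀ ℤ, ℓ ≠ 0 →
      γ * ∏ n ∈ ℓ.support, (1 + (ℓ n : ℝ) ^ 2 * jap n ^ (2 + q))⁻¹ <
        |∑ n ∈ ℓ.support, ω n * (ℓ n : ℝ)|)
    (α β : ℤ →₀ ℕ) (hne : α ≠ β)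
    (hmass : (α.sum fun _ n => n) = β.sum fun _ n => n)
    (hmass1 : 1 ≤ α.sum fun _ n => n)
    (π : ℝ)
    (hπ : π = ∑ i ∈ α.support ∪ β.support, (i : ℝ) * ((α i : ℝ) - (β i : ℝ)))
    (j : ℤ) (hj : 1 ≤ α j + β j) :
    γ * Real.exp (-σ *
        ((∑ i ∈ α.support ∪ β.support, jap i ^ θ * ((α i : ℝ) + (β i : ℝ))) -
          2 * jap j ^ θ + |π|)) ≤
      Real.exp
          ((28 * θ⁻¹ * (q + 3) * (8 * (q + 3) * (13 / (1 - θ)) * θ⁻¹) ^ (2 / θ) *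
              Real.log (8 * (q + 3) * (13 / (1 - θ)) * θ⁻¹) ^ (2 / θ + 1)) *
            σ ^ (-(3 / θ))) *
        |∑ i ∈ α.support ∪ β.support, ω i * ((α i : ℝ) - (β i : ℝ))| := by
  subst hπ
  refine gevrey_small_divisor_estimate_general (by linarith) hγ0.le hγ1 hθ0 hθ1 hσ0 hσ1
    (fun i => ?_) hdio hne hmass hj
  linarith [hω i, le_mul_of_one_le_right (abs_nonneg (ω i - (i : ℝ) ^ 2))
    (Real.one_le_rpow (one_le_jap i) hq)]
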